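/- Every coefficient of the formal power series 8·J_2^7·J_7/(J_1^7·J_14) − 1 is divisible by 7; equivalently, the series p_0 := (8·J_2^7·J_7/(J_1^7·J_14) − 1)/7 has integer coefficients. -/

import Mathlib

noncomputable section

/-- `J b = ∏_{k=1}^∞ (1 - q^{b·k})` as a formal power series with integer coefficients. -/
def J (b : ℕ) : PowerSeries ℤ :=
  PowerSeries.mk fun n =>
    PowerSeries.coeff n
      (∏ k ∈ Finset.range (n + 1), (1 - (PowerSeries.X : PowerSeries ℤ) ^ (b * (k + 1))))

/-!
For a prime `p`, the Frobenius map gives `f(q)^p ≡ f(q^p)` modulo `p` for every integral power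
series `f`. Since `J_b(q^p) = J_{pb}(q)`, both `J_1^p / J_p` and `J_2^p / J_{2p}` are congruent
to `1` modulo `p`, and hence so is `p + 1` times the second divided by the first.
-/

section

open PowerSeries

lemma natCast_dvd_iff_map_castRingHom_eq_zero (n : ℕ) (f : ℤ⟦X⟧) :
    (n : ℤ⟦X⟧) ∣ f ↔ map (Int.castRingHom (ZMod n)) f = 0 := by
  constructor
  · rintro ⟨g, rfl⟩
    have hn : (n : (ZMod n)⟦X⟧) = 0 := by
      rw [← map_natCast (C (R := ZMod n)), ZMod.natCast_self, map_zero]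
    rw [map_mul, map_natCast, hn, zero_mul]
  · intro hf
    have hcoeff (k : ℕ) : (n : ℤ) ∣ coeff k f := by
      rw [← ZMod.intCast_zmod_eq_zero_iff_dvd]
      simpa using congrArg (coeff k) hf
    choose c hc using hcoeff
    refine ⟨mk c, ?_⟩
    ext k
    rw [hc, ← map_natCast (C (R := ℤ)), coeff_C_mul, coeff_mk]

section Frobenius

variable (p : ℕ) [hp : Fact p.Prime]

lemma powerSeries_expand_zmod (f : (ZMod p)⟦X⟧) : expand p hp.out.ne_zero f = f ^ p := by
  have hfrob := MvPowerSeries.map_frobenius_expand p hp.out.ne_zero (f := f)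
  rwa [ZMod.frobenius_zmod, MvPowerSeries.map_id] at hfrob

lemma prime_dvd_pow_sub_expand (f : ℤ⟦X⟧) : (p : ℤ⟦X⟧) ∣ f ^ p - expand p hp.out.ne_zero f := by
  rw [natCast_dvd_iff_map_castRingHom_eq_zero, map_sub, map_pow, map_expand,
    powerSeries_expand_zmod, sub_self]

end Frobenius

lemma coeff_J_eq_coeff_prod_range {b n N : ℕ} (hb : b ≠ 0) (hn : n < N) :
    coeff n (J b) = coeff n (∏ k ∈ Finset.range N, (1 - (X : ℤ⟦X⟧) ^ (b * (k + 1)))) := by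
  rw [J, coeff_mk, ← Finset.prod_range_mul_prod_Ico _ (Nat.succ_le_of_lt hn)]
  symm
  apply coeff_mul_prod_one_sub_of_lt_order
  intro k hk
  rw [order_X_pow, Nat.cast_lt]
  calc n < k + 1 := Nat.lt_succ_of_lt (Finset.mem_Ico.mp hk).1
    _ ≤ b * (k + 1) := Nat.le_mul_of_pos_left _ (Nat.pos_of_ne_zero hb)

lemma expand_J {m b : ℕ} (hm : m ≠ 0) (hb : b ≠ 0) : expand m hm (J b) = J (m * b) := by
  ext n
  calc coeff n (expand m hm (J b))
      = coeff n (expand m hm (∏ k ∈ Finset.range (n + 1), (1 - X ^ (b * (k + 1))))) := by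
        rw [coeff_expand, coeff_expand,
          coeff_J_eq_coeff_prod_range hb (Nat.lt_succ_of_le (Nat.div_le_self n m))]
    _ = coeff n (J (m * b)) := by
        simp only [J, coeff_mk, map_prod, map_sub, map_one, map_pow, expand_X, ← pow_mul, mul_assoc]

lemma isUnit_J {b : ℕ} (hb : b ≠ 0) : IsUnit (J b) := by
  have hconst : constantCoeff (J b) = 1 := by
    rw [← coeff_zero_eq_constantCoeff_apply]
    simp [J, hb]
  rw [isUnit_iff_constantCoeff, hconst]
  exact isUnit_one

lemma prime_dvd_J_pow_sub_J_mul (p : ℕ) [hp : Fact p.Prime] {b : ℕ} (hb : b ≠ 0) :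
    (p : ℤ⟦X⟧) ∣ J b ^ p - J (p * b) := by
  rw [← expand_J hp.out.ne_zero hb]
  exact prime_dvd_pow_sub_expand p (J b)

theorem stmt8_general (p : ℕ) [hp : Fact p.Prime] {a b : ℕ} (ha : a ≠ 0) (hb : b ≠ 0) :
    ∃ f : ℤ⟦X⟧, (1 + p * f) * (J a ^ p * J (p * b)) = (p + 1) * J b ^ p * J (p * a) := by
  have hdvd : (p : ℤ⟦X⟧) ∣ (p + 1) * J b ^ p * J (p * a) - J a ^ p * J (p * b) := by
    obtain ⟨A, hA⟩ := prime_dvd_J_pow_sub_J_mul p ha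
    obtain ⟨B, hB⟩ := prime_dvd_J_pow_sub_J_mul p hb
    exact ⟨J b ^ p * J (p * a) + B * J (p * a) - A * J (p * b), by
      linear_combination J (p * a) * hB - J (p * b) * hA⟩
  obtain ⟨g, hg⟩ := hdvd
  obtain ⟨w, hw⟩ :=
    (((isUnit_J ha).pow p).mul (isUnit_J (mul_ne_zero hp.out.ne_zero hb))).exists_left_inv
  exact ⟨g * w, by linear_combination p * g * hw - hg⟩

end

/-- every coefficient of `8·J_2^7·J_7/(J_1^7·J_14) − 1` is divisible by 7;
equivalently, there is a power series `p₀` with integer coefficients satisfying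
`1 + 7·p₀ = 8·J_2^7·J_7/(J_1^7·J_14)`, i.e. `(1 + 7·p₀)·(J_1^7·J_14) = 8·J_2^7·J_7`. -/
theorem stmt8 :
    ∃ p₀ : PowerSeries ℤ,
      (1 + 7 * p₀) * ((J 1) ^ 7 * J 14) = 8 * (J 2) ^ 7 * J 7 := by
  have : Fact (Nat.Prime 7) := ⟨Nat.prime_seven⟩
  simpa [show (7 + 1 : PowerSeries ℤ) = 8 by norm_num] using
    stmt8_general 7 one_ne_zero two_ne_zero
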